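/- Let (M, Ω) be a 2n-dimensional symplectic manifold and φ: N → M a smooth symplectic immersion of a 2k-dimensional manifold N. Let ∇ be a symplectic connection on (M, Ω) and ∇̄ the induced symplectic connection on (N, φ^*(Ω)) with second fundamental form Π. If ∇ has constant symplectic sectional curvature, then (k+1)·φ^*(Ric^∇)_{ij} = (n+1)·(R̄_{ij} + smc_{ij}), where R̄_{ij} is the Ricci curvature of ∇̄ and smc_{ij} = ω^{ab}Ω_{AB}Π_{ia}{}^AΠ_{jb}{}^B with ω^{ij} the bivector inverse to ω_{ij} = φ^*(Ω)_{ij}. In particular, if smc_{ij} = 0 then the Ricci curvature of ∇̄ equals (k+1)/(n+1) times the pullback of the Ricci curvature of ∇. -/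

import Mathlib

/- Chart model of a symplectic manifold: the manifold is modeled by (a global affine chart of)
a finite-dimensional real normed vector space `E`; a symplectic form is a smooth field of
nondegenerate antisymmetric bilinear forms (closedness is automatic in the presence of a
compatible torsion-free connection), and a symplectic connection is recorded by its
(torsion-free) Christoffel symbols, preserving the symplectic form. -/

structure SympForm (E : Type*) [NormedAddCommGroup E] [NormedSpace ℝ E] where
  ω : E → E →L[ℝ] E →L[ℝ] ℝ
  smooth : ContDiff ℝ (⊤ : ℕ∞) ω
  skew : ∀ x u v, ω x u v = - ω x v u
  nondeg : ∀ x u, (∀ v, ω x u v = 0) → u = 0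

structure SympConnection {E : Type*} [NormedAddCommGroup E] [NormedSpace ℝ E]
    (Ω : SympForm E) where
  Γ : E → E →L[ℝ] E →L[ℝ] E
  smooth : ContDiff ℝ (⊤ : ℕ∞) Γ
  symm : ∀ x u v, Γ x u v = Γ x v u
  parallel : ∀ x u v w, fderiv ℝ Ω.ω x u v w = Ω.ω x (Γ x u v) w + Ω.ω x v (Γ x u w)

variable {E : Type*} [NormedAddCommGroup E] [NormedSpace ℝ E]

/-- Curvature `R(u,v)w = ∇_u∇_v w - ∇_v∇_u w - ∇_{[u,v]}w` of a symplectic connection,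
evaluated on constant vector fields of the chart, as an operator in `w`. -/
noncomputable def curvOp {Ω : SympForm E} (C : SympConnection Ω) (x u v : E) : E →L[ℝ] E :=
  fderiv ℝ C.Γ x u v - fderiv ℝ C.Γ x v u
    + (C.Γ x u).comp (C.Γ x v) - (C.Γ x v).comp (C.Γ x u)

/-- Lowered curvature `R_{ijkl} = R_{ijk}{}^p Ω_{pl}`, i.e. `Ω(R(u,v)w, z)`. -/
noncomputable def Rlow {Ω : SympForm E} (C : SympConnection Ω) (x u v w z : E) : ℝ :=
  Ω.ω x (curvOp C x u v w) z

/-- The symplectic curvature quadratic form `scurv_{x,L}(Z)` of the plane `L` spanned by `X, Y`. -/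
noncomputable def scurv {Ω : SympForm E} (C : SympConnection Ω) (x X Y Z : E) : ℝ :=
  Rlow C x X Y Z Z / Ω.ω x X Y

/-- Ricci tensor `R_{ij} = R_{pij}{}^p`: the trace of `w ↦ R(w,u)v`. -/
noncomputable def ricci {Ω : SympForm E} (C : SympConnection Ω) (x u v : E) : ℝ :=
  LinearMap.trace ℝ E
    ((((fderiv ℝ C.Γ x).flip u).flip v - ((fderiv ℝ C.Γ x) u).flip v
      + (C.Γ x).flip (C.Γ x u v) - (C.Γ x u).comp ((C.Γ x).flip v)).toLinearMap)

/-- Covariant derivative `(∇_w Ric)(u,v)` of the Ricci tensor. -/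
noncomputable def covDerivRic {Ω : SympForm E} (C : SympConnection Ω) (x w u v : E) : ℝ :=
  fderiv ℝ (fun y => ricci C y u v) x w - ricci C x (C.Γ x w u) v - ricci C x u (C.Γ x w v)

/-- Covariant derivative `(∇_a R)(u,v,w,z)` of the (lowered) curvature tensor. -/
noncomputable def covDerivR {Ω : SympForm E} (C : SympConnection Ω) (x a u v w z : E) : ℝ :=
  fderiv ℝ (fun y => Rlow C y u v w z) x a
    - Rlow C x (C.Γ x a u) v w z - Rlow C x u (C.Γ x a v) w z
    - Rlow C x u v (C.Γ x a w) z - Rlow C x u v w (C.Γ x a z)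

/-- `∇` is locally symmetric: `∇R = 0`. -/
def LocallySymmetric {Ω : SympForm E} (C : SympConnection Ω) : Prop :=
  ∀ x a u v w z, covDerivR C x a u v w z = 0

/-- The Ricci tensor is parallel. -/
def ParallelRicci {Ω : SympForm E} (C : SympConnection Ω) : Prop :=
  ∀ x w u v, covDerivRic C x w u v = 0

/-- The symplectic Weyl tensor
`W_{ijkl} = R_{ijkl} − (1/(n+1))(Ω_{i(k}R_{l)j} − Ω_{j(k}R_{l)i} + Ω_{ij}R_{kl})`
on a manifold of dimension `2n`. -/
noncomputable def weyl (n : ℕ) {Ω : SympForm E} (C : SympConnection Ω) (x u v w z : E) : ℝ :=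
  Rlow C x u v w z - (1 / ((n : ℝ) + 1)) *
    ((Ω.ω x u w * ricci C x z v + Ω.ω x u z * ricci C x w v) / 2
      - (Ω.ω x v w * ricci C x z u + Ω.ω x v z * ricci C x w u) / 2
      + Ω.ω x u v * ricci C x w z)

/-- `∇` is Weyl flat (of Ricci type): its symplectic Weyl tensor vanishes. -/
def WeylFlat (n : ℕ) {Ω : SympForm E} (C : SympConnection Ω) : Prop :=
  ∀ x u v w z, weyl n C x u v w z = 0

/-- `∇` is preferred: `∇_{(i}R_{jk)} = 0` (cyclic symmetrization suffices since `Ric` is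
symmetric in its last two arguments). -/
def Preferred {Ω : SympForm E} (C : SympConnection Ω) : Prop :=
  ∀ x u v w, covDerivRic C x u v w + covDerivRic C x v w u + covDerivRic C x w u v = 0

/-- Vanishing of the curvature one-form `ρ_i = ∇^p R_{ip}`: the index is raised with `Ω`, and
the `Ω`-contraction is encoded as the trace of any linear packaging `D` of `∇Ric` against `Ω`
(such a `D` exists and is unique by nondegeneracy of `Ω`). -/
def RhoZero {Ω : SympForm E} (C : SympConnection Ω) : Prop :=
  ∀ x u, ∀ D : E →ₗ[ℝ] E,
    (∀ w v, Ω.ω x (D w) v = covDerivRic C x w u v) → LinearMap.trace ℝ E D = 0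

/-- `A` is a parallel symmetric covariant 2-tensor field. -/
def IsParallelSym2 {Ω : SympForm E} (C : SympConnection Ω)
    (A : E → E →L[ℝ] E →L[ℝ] ℝ) : Prop :=
  (∀ x u v, A x u v = A x v u) ∧ Differentiable ℝ A ∧
    ∀ x u v w, fderiv ℝ A x u v w = A x (C.Γ x u v) w + A x v (C.Γ x u w)

/-- `∇` has constant symplectic sectional curvature: there is a parallel symmetric 2-tensor `A`
such that on every 2-dimensional symplectic subspace (spanned by `X, Y` with `Ω(X,Y) ≠ 0`)
the symplectic curvature quadratic form is the restriction of the quadratic form of `A`. -/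
def HasConstScurv {Ω : SympForm E} (C : SympConnection Ω) : Prop :=
  ∃ A : E → E →L[ℝ] E →L[ℝ] ℝ, IsParallelSym2 C A ∧
    ∀ x X Y, Ω.ω x X Y ≠ 0 →
      ∀ Z ∈ Submodule.span ℝ ({X, Y} : Set E), scurv C x X Y Z = A x Z Z

/-- Lie bracket of vector fields on the chart. -/
noncomputable def lieVF (X Y : E → E) (x : E) : E :=
  fderiv ℝ Y x (X x) - fderiv ℝ X x (Y x)

/-- Covariant derivative `∇_X Y` of vector fields on the chart. -/
noncomputable def covVF {Ω : SympForm E} (C : SympConnection Ω) (X Y : E → E) (x : E) : E :=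
  fderiv ℝ Y x (X x) + C.Γ x (X x) (Y x)

/-- Nijenhuis tensor of an endomorphism field, evaluated on constant vector fields. -/
noncomputable def nijTensor (A : E → E → E) (x u v : E) : E :=
  lieVF (fun y => A y u) (fun y => A y v) x
    - A x (lieVF (fun y => A y u) (fun _ => v) x)
    - A x (lieVF (fun _ => u) (fun y => A y v) x)
    + A x (A x (lieVF (fun _ => u) (fun _ => v) x))

/-- Covariant derivative along a curve `γ` of a field `V` along `γ`. -/
noncomputable def covAlong {Ω : SympForm E} (C : SympConnection Ω) (γ V : ℝ → E) (t : ℝ) : E :=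
  deriv V t + C.Γ (γ t) (deriv γ t) (V t)

/-- `(g,J,Ω)` has constant (para-)holomorphic sectional curvature `4c`:
`R_{ijkl} = 2c(Ω_{i(k}g_{l)j} − Ω_{j(k}g_{l)i} + Ω_{ij}g_{kl})`. -/
def ConstHoloSec {Ω : SympForm E} (C : SympConnection Ω) (g : E → E → E → ℝ) (c : ℝ) : Prop :=
  ∀ x u v w z, Rlow C x u v w z =
    2 * c * ((Ω.ω x u w * g x z v + Ω.ω x u z * g x w v) / 2
      - (Ω.ω x v w * g x z u + Ω.ω x v z * g x w u) / 2
      + Ω.ω x u v * g x w z)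

/-- `C` is the Levi-Civita connection of the metric `g`: `C` is torsion free and `∇g = 0`. -/
def IsLeviCivita {Ω : SympForm E} (C : SympConnection Ω) (g : E → E → E → ℝ) : Prop :=
  ∀ x u v w, fderiv ℝ (fun y => g y v w) x u = g x (C.Γ x u v) w + g x v (C.Γ x u w)

/-! Both sides are compared with a curvature tensor of Ricci type `T_B` built from `Ω` and a
symmetric form `B`. Constant sectional curvature prescribes `R(X, Y, X, X)`, and a symplectic
curvature tensor is determined by these values, so `R = T_B` for some `B`; the `Ω`-trace of `T_B` in
dimension `2n` is `2(n + 1) B`. By the Gauss equation the curvature of the submanifold is `T_{φ^*B}`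
plus two terms quadratic in the second fundamental form `Π`. One of them, `Ω(Π(u, v), Π(w, z))`, is
symmetric in `w, z` and hence traceless, while the other contributes `smc`. Tracing in dimension
`2k` gives `2(k + 1) φ^*B = R̄ + smc`, and eliminating `B` yields the identity. -/

section SymplecticTrace

open LinearMap

variable {K V : Type*} [Field K] [AddCommGroup V] [Module K V]

theorem trace_eq_of_isAdjointPair [FiniteDimensional K V] {ω : LinearMap.BilinForm K V}
    (hω : ω.Nondegenerate) {f g : Module.End K V} (h : IsAdjointPair ω ω f g) :
    trace K V f = trace K V g := by
  have conj_eq_transpose : (ω.toDual hω).conj f = Module.Dual.transpose (R := K) g := by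
    ext ℓ z
    obtain ⟨w, rfl⟩ := (ω.toDual hω).surjective ℓ
    rw [LinearEquiv.conj_apply_apply, LinearEquiv.symm_apply_apply, BilinForm.toDual_def]
    exact (h w z).trans (BilinForm.toDual_def hω).symm
  rw [← trace_conj' f (ω.toDual hω), conj_eq_transpose, trace_transpose']

theorem trace_eq_zero_of_symm [NeZero (2 : K)] [FiniteDimensional K V]
    {ω : LinearMap.BilinForm K V} (hω : ω.Nondegenerate) (halt : ω.IsAlt) {f : Module.End K V}
    (hf : ∀ w z, ω (f w) z = ω (f z) w) : trace K V f = 0 := by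
  have trace_eq_neg : trace K V f = trace K V (-f) :=
    trace_eq_of_isAdjointPair hω fun w z => by
      rw [hf, ← halt.neg_eq, LinearMap.neg_apply, map_neg]
  rw [map_neg] at trace_eq_neg
  refine (mul_eq_zero.mp ?_).resolve_left (two_ne_zero (α := K))
  linear_combination trace_eq_neg

/-- The curvature tensor of Ricci type determined by a symplectic form `ω` and a symmetric form `B`.
It is normalised so as to need no division: the curvature of a symplectic connection of Ricci type
on a `2n`-dimensional manifold is of this form with `B = Ric / (2 (n + 1))`. -/
def ricciTypeCurv (ω B : LinearMap.BilinForm K V) (u v w z : V) : K :=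
  ω u w * B v z + ω u z * B v w - ω v w * B u z - ω v z * B u w + 2 * ω u v * B w z

/-- The endomorphism `w ↦ T(w, u) v` for the curvature tensor `T = ricciTypeCurv ω B`, with its last
index raised by `ω`; its trace is the Ricci tensor of `T`. -/
noncomputable def ricciTypeEnd [FiniteDimensional K V] {ω : LinearMap.BilinForm K V}
    (hω : ω.Nondegenerate) (B : LinearMap.BilinForm K V) (u v : V) : Module.End K V :=
  let b := B.symmCompOfNondegenerate ω hω
  (ω.flip v).smulRight (b u) + B u v • LinearMap.id - ω u v • b - (B.flip v).smulRight u
    + (2 : K) • (ω.flip u).smulRight (b v)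

theorem apply_ricciTypeEnd [FiniteDimensional K V] {ω : LinearMap.BilinForm K V}
    (hω : ω.Nondegenerate) (B : LinearMap.BilinForm K V) (u v w z : V) :
    ω (ricciTypeEnd hω B u v w) z = ricciTypeCurv ω B w u v z := by
  simp only [ricciTypeEnd, ricciTypeCurv, LinearMap.add_apply, LinearMap.sub_apply,
    coe_smulRight, BilinForm.flip_apply, LinearMap.smul_apply, id_coe, id_eq, map_add, map_sub,
    map_smul, BilinForm.symmCompOfNondegenerate_left_apply, smul_eq_mul]
  ring

theorem trace_ricciTypeEnd [NeZero (2 : K)] [FiniteDimensional K V] {ω B : LinearMap.BilinForm K V}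
    (hω : ω.Nondegenerate) (halt : ω.IsAlt) (hB : B.IsSymm) (u v : V) :
    trace K V (ricciTypeEnd hω B u v) = (Module.finrank K V + 2) * B u v := by
  have trace_raise_eq_zero : trace K V (B.symmCompOfNondegenerate ω hω) = 0 :=
    trace_eq_zero_of_symm hω halt fun w z => by
      rw [BilinForm.symmCompOfNondegenerate_left_apply,
        BilinForm.symmCompOfNondegenerate_left_apply, hB.eq]
  simp only [ricciTypeEnd, map_add, map_sub, map_smul, trace_smulRight, trace_id,
    trace_raise_eq_zero, BilinForm.flip_apply, BilinForm.symmCompOfNondegenerate_left_apply,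
    smul_eq_mul, hB.eq v u]
  ring

theorem trace_eq_of_ricciTypeCurv_add_symm [NeZero (2 : K)] [FiniteDimensional K V]
    {ω B : LinearMap.BilinForm K V} (hω : ω.Nondegenerate) (halt : ω.IsAlt) (hB : B.IsSymm)
    {u v : V} {Q : Module.End K V} {S : V → V → K} (hS : ∀ w z, S w z = S z w)
    (hQ : ∀ w z, ω (Q w) z = ricciTypeCurv ω B w u v z + S w z) :
    trace K V Q = (Module.finrank K V + 2) * B u v := by
  have form_sub : ∀ w z, ω ((Q - ricciTypeEnd hω B u v) w) z = S w z := fun w z => by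
    rw [LinearMap.sub_apply, map_sub, LinearMap.sub_apply, hQ, apply_ricciTypeEnd,
      add_sub_cancel_left]
  have trace_sub_eq_zero := trace_eq_zero_of_symm hω halt fun w z => by
    rw [form_sub w z, form_sub z w, hS]
  rwa [map_sub, trace_ricciTypeEnd hω halt hB, sub_eq_zero] at trace_sub_eq_zero

end SymplecticTrace

section SymplecticCurvature

variable {K V : Type*} [Field K] [AddCommGroup V]

/-- The symmetries of the lowered curvature tensor of a symplectic connection. Only additivity is
recorded, and only in the two arguments from which the symmetries give it in the other two. -/
structure IsSymplecticCurvature (S : V → V → V → V → K) : Prop where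
  add_first : ∀ u u' v w z, S (u + u') v w z = S u v w z + S u' v w z
  add_third : ∀ u v w w' z, S u v (w + w') z = S u v w z + S u v w' z
  antisymm : ∀ u v w z, S u v w z = -S v u w z
  symm : ∀ u v w z, S u v w z = S u v z w
  bianchi : ∀ u v w z, S u v w z + S v w u z + S w u v z = 0

namespace IsSymplecticCurvature

variable {S T : V → V → V → V → K}

theorem sub (hS : IsSymplecticCurvature S) (hT : IsSymplecticCurvature T) :
    IsSymplecticCurvature fun u v w z => S u v w z - T u v w z where
  add_first u u' v w z := by rw [hS.add_first, hT.add_first]; ring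
  add_third u v w w' z := by rw [hS.add_third, hT.add_third]; ring
  antisymm u v w z := by rw [hS.antisymm, hT.antisymm]; ring
  symm u v w z := by rw [hS.symm, hT.symm]
  bianchi u v w z := by linear_combination hS.bianchi u v w z - hT.bianchi u v w z

theorem add_second (hS : IsSymplecticCurvature S) (u v v' w z : V) :
    S u (v + v') w z = S u v w z + S u v' w z := by
  rw [hS.antisymm, hS.add_first, hS.antisymm u v, hS.antisymm u v']
  ring

theorem add_fourth (hS : IsSymplecticCurvature S) (u v w z z' : V) :
    S u v w (z + z') = S u v w z + S u v w z' := by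
  rw [hS.symm, hS.add_third, hS.symm u v z, hS.symm u v z']

variable [NeZero (2 : K)]

theorem polarize (hS : IsSymplecticCurvature S) (hdiag : ∀ X Y, S X Y X X = 0) (a b c d : V) :
    S a b c d + S c b a d + S d b a c = 0 := by
  have hacd := hdiag (a + c + d) b
  have hac := hdiag (a + c) b
  have had := hdiag (a + d) b
  have hcd := hdiag (c + d) b
  simp only [hS.add_first, hS.add_third, hS.add_fourth] at hacd hac had hcd
  refine (mul_eq_zero.mp ?_).resolve_left (two_ne_zero (α := K))
  linear_combination hacd - hac - had - hcd + hdiag a b + hdiag c b + hdiag d b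
    + hS.symm a b c d + hS.symm c b a d + hS.symm d b a c

theorem eq_zero_of_diag (hS : IsSymplecticCurvature S) (hdiag : ∀ X Y, S X Y X X = 0)
    (a b c d : V) : S a b c d = 0 := by
  have hc : S c b a d = S a b c d + S c a b d := by
    linear_combination hS.bianchi c b a d - hS.antisymm b a c d - hS.antisymm a c b d
  have hd : S d b a c = S a b c d + S d a b c := by
    linear_combination hS.bianchi d b a c - hS.antisymm b a d c - hS.antisymm a d b c
      - hS.symm a b c d
  have four_mul : (2 : K) * (2 * S a b c d) = 0 := by
    linear_combination hS.polarize hdiag a b c d - hS.polarize hdiag b a c d - hc - hd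
      + hS.antisymm b a c d
  simpa [two_ne_zero] using four_mul

theorem ext_diag (hS : IsSymplecticCurvature S) (hT : IsSymplecticCurvature T)
    (hdiag : ∀ X Y, S X Y X X = T X Y X X) (u v w z : V) : S u v w z = T u v w z :=
  sub_eq_zero.mp ((sub hS hT).eq_zero_of_diag (fun X Y => sub_eq_zero.mpr (hdiag X Y)) u v w z)

end IsSymplecticCurvature

variable [Module K V] {ω B : LinearMap.BilinForm K V}

theorem isSymplecticCurvature_ricciTypeCurv (halt : ω.IsAlt) (hB : B.IsSymm) :
    IsSymplecticCurvature (ricciTypeCurv ω B) where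
  add_first u u' v w z := by
    simp only [ricciTypeCurv, map_add, LinearMap.add_apply]; ring
  add_third u v w w' z := by
    simp only [ricciTypeCurv, map_add, LinearMap.add_apply]; ring
  antisymm u v w z := by
    simp only [ricciTypeCurv, ← halt.neg_eq u v]; ring
  symm u v w z := by
    simp only [ricciTypeCurv, hB.eq w z]; ring
  bianchi u v w z := by
    simp only [ricciTypeCurv, ← halt.neg_eq u v, ← halt.neg_eq v w, ← halt.neg_eq u w,
      hB.eq v u, hB.eq w u, hB.eq w v]
    ring

theorem ricciTypeCurv_diag (halt : ω.IsAlt) (X Y : V) :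
    ricciTypeCurv ω B X Y X X = 4 * (ω X Y * B X X) := by
  simp only [ricciTypeCurv, halt.self_eq_zero, ← halt.neg_eq X Y]
  ring

end SymplecticCurvature

section Calculus

variable {F G H L : Type*} [NormedAddCommGroup F] [NormedSpace ℝ F]
  [NormedAddCommGroup G] [NormedSpace ℝ G] [NormedAddCommGroup H] [NormedSpace ℝ H]
  [NormedAddCommGroup L] [NormedSpace ℝ L]

theorem fderiv_clm_apply_const {B : E → G →L[ℝ] H} {x : E} (hB : DifferentiableAt ℝ B x)
    (u : E) (v : G) : fderiv ℝ (fun y => B y v) x u = fderiv ℝ B x u v := by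
  simp [fderiv_clm_apply hB (differentiableAt_const v)]

theorem differentiableAt_comp_clm_apply₂ {B : E → G →L[ℝ] H →L[ℝ] L} {φ : F → E} {V : F → G}
    {W : F → H} {x : F} (hB : DifferentiableAt ℝ B (φ x)) (hφ : DifferentiableAt ℝ φ x)
    (hV : DifferentiableAt ℝ V x) (hW : DifferentiableAt ℝ W x) :
    DifferentiableAt ℝ (fun y => B (φ y) (V y) (W y)) x :=
  ((hB.comp x hφ).clm_apply hV).clm_apply hW

theorem fderiv_comp_clm_apply₂ {B : E → G →L[ℝ] H →L[ℝ] L} {φ : F → E} {V : F → G} {W : F → H}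
    {x : F} (hB : DifferentiableAt ℝ B (φ x)) (hφ : DifferentiableAt ℝ φ x)
    (hV : DifferentiableAt ℝ V x) (hW : DifferentiableAt ℝ W x) (u : F) :
    fderiv ℝ (fun y => B (φ y) (V y) (W y)) x u
      = fderiv ℝ B (φ x) (fderiv ℝ φ x u) (V x) (W x)
        + B (φ x) (fderiv ℝ V x u) (W x) + B (φ x) (V x) (fderiv ℝ W x u) := by
  have hBφ : HasFDerivAt (fun y => B (φ y)) (fderiv ℝ B (φ x) ∘L fderiv ℝ φ x) x :=
    HasFDerivAt.comp (g := B) x hB.hasFDerivAt hφ.hasFDerivAt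
  rw [((hBφ.clm_apply hV.hasFDerivAt).clm_apply hW.hasFDerivAt).fderiv]
  simp only [ContinuousLinearMap.flip_add, _root_.add_apply, ContinuousLinearMap.comp_apply,
    ContinuousLinearMap.flip_apply]
  abel

theorem differentiable_fderiv_of_contDiff_two {f : E → G} (hf : ContDiff ℝ 2 f) :
    Differentiable ℝ (fderiv ℝ f) :=
  (hf.fderiv_right (m := 1) (by norm_num)).differentiable one_ne_zero

theorem fderiv_fderiv_apply_comm {f : E → G} (hf : ContDiff ℝ 2 f) (x u v : E) :
    fderiv ℝ (fun y => fderiv ℝ f y v) x u = fderiv ℝ (fun y => fderiv ℝ f y u) x v := by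
  have hsymm : IsSymmSndFDerivAt ℝ f x := hf.contDiffAt.isSymmSndFDerivAt (by simp)
  rw [fderiv_clm_apply_const (differentiable_fderiv_of_contDiff_two hf x),
    fderiv_clm_apply_const (differentiable_fderiv_of_contDiff_two hf x), hsymm.eq]

end Calculus

namespace SympForm

variable (Ω : SympForm E) (x : E)

theorem isAlt_toBilinForm : (Ω.ω x).toBilinForm.IsAlt := fun u =>
  self_eq_neg.mp (Ω.skew x u u)

theorem nondegenerate_toBilinForm : (Ω.ω x).toBilinForm.Nondegenerate :=
  ⟨fun u hu => Ω.nondeg x u hu,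
    fun v hv => Ω.nondeg x v fun u => by rw [Ω.skew]; exact neg_eq_zero.mpr (hv u)⟩

theorem differentiable : Differentiable ℝ Ω.ω :=
  Ω.smooth.differentiable (by simp)

end SympForm

namespace SympConnection

variable {F : Type*} [NormedAddCommGroup F] [NormedSpace ℝ F] {Ω : SympForm E}
  (C : SympConnection Ω) {φ V W : F → E}

theorem differentiable : Differentiable ℝ C.Γ :=
  C.smooth.differentiable (by simp)

/-- The covariant derivative `(∇_u V)(x)` of a vector field `V` along a map `φ`, that is, the
pullback by `φ` of the connection applied to a section of the pullback of the tangent bundle. -/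
noncomputable def covAlongMap (φ V : F → E) (x u : F) : E :=
  fderiv ℝ V x u + C.Γ (φ x) (fderiv ℝ φ x u) (V x)

theorem covAlongMap_id_const (x u w : E) : C.covAlongMap id (fun _ => w) x u = C.Γ x u w := by
  simp [covAlongMap]

theorem differentiable_covAlongMap (hφ : ContDiff ℝ 2 φ) (hV : ContDiff ℝ 2 V) (v : F) :
    Differentiable ℝ fun y => C.covAlongMap φ V y v := fun x =>
  .add ((differentiable_fderiv_of_contDiff_two hV x).clm_apply (differentiableAt_const v))
    (differentiableAt_comp_clm_apply₂ (C.differentiable _) (hφ.differentiable two_ne_zero x)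
      ((differentiable_fderiv_of_contDiff_two hφ x).clm_apply (differentiableAt_const v))
      (hV.differentiable two_ne_zero x))

theorem fderiv_omega_along {x : F} (hφ : DifferentiableAt ℝ φ x) (hV : DifferentiableAt ℝ V x)
    (hW : DifferentiableAt ℝ W x) (u : F) :
    fderiv ℝ (fun y => Ω.ω (φ y) (V y) (W y)) x u
      = Ω.ω (φ x) (C.covAlongMap φ V x u) (W x) + Ω.ω (φ x) (V x) (C.covAlongMap φ W x u) := by
  rw [fderiv_comp_clm_apply₂ (Ω.differentiable _) hφ hV hW, C.parallel]
  simp only [covAlongMap, map_add, _root_.add_apply]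
  ring

theorem covAlongMap_covAlongMap_sub (hφ : ContDiff ℝ 2 φ) (hV : ContDiff ℝ 2 V) (x u v : F) :
    C.covAlongMap φ (fun y => C.covAlongMap φ V y v) x u
        - C.covAlongMap φ (fun y => C.covAlongMap φ V y u) x v
      = curvOp C (φ x) (fderiv ℝ φ x u) (fderiv ℝ φ x v) (V x) := by
  have dφ := hφ.differentiable two_ne_zero x
  have dV := hV.differentiable two_ne_zero x
  have dφ' (a : F) : DifferentiableAt ℝ (fun y => fderiv ℝ φ y a) x :=
    (differentiable_fderiv_of_contDiff_two hφ x).clm_apply (differentiableAt_const a)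
  have dV' (a : F) : DifferentiableAt ℝ (fun y => fderiv ℝ V y a) x :=
    (differentiable_fderiv_of_contDiff_two hV x).clm_apply (differentiableAt_const a)
  have fderiv_cov (a b : F) : fderiv ℝ (fun y => C.covAlongMap φ V y b) x a
      = fderiv ℝ (fun y => fderiv ℝ V y b) x a
        + (fderiv ℝ C.Γ (φ x) (fderiv ℝ φ x a) (fderiv ℝ φ x b) (V x)
          + C.Γ (φ x) (fderiv ℝ (fun y => fderiv ℝ φ y b) x a) (V x)
          + C.Γ (φ x) (fderiv ℝ φ x b) (fderiv ℝ V x a)) := by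
    rw [← fderiv_comp_clm_apply₂ (C.differentiable _) dφ (dφ' b) dV]
    exact DFunLike.congr_fun (fderiv_fun_add (dV' b)
      (differentiableAt_comp_clm_apply₂ (C.differentiable _) dφ (dφ' b) dV)) a
  rw [covAlongMap, fderiv_cov, covAlongMap.eq_def C φ (fun y => C.covAlongMap φ V y u), fderiv_cov,
    fderiv_fderiv_apply_comm hV x u v, fderiv_fderiv_apply_comm hφ x u v]
  simp only [covAlongMap, curvOp, map_add, _root_.add_apply, _root_.sub_apply,
    ContinuousLinearMap.comp_apply]
  abel

theorem fderiv_fderiv_omega_along (hφ : ContDiff ℝ 2 φ) (hV : ContDiff ℝ 2 V)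
    (hW : ContDiff ℝ 2 W) (x u v : F) :
    fderiv ℝ (fun y => fderiv ℝ (fun p => Ω.ω (φ p) (V p) (W p)) y v) x u
      = Ω.ω (φ x) (C.covAlongMap φ (fun y => C.covAlongMap φ V y v) x u) (W x)
        + Ω.ω (φ x) (C.covAlongMap φ V x v) (C.covAlongMap φ W x u)
        + (Ω.ω (φ x) (C.covAlongMap φ V x u) (C.covAlongMap φ W x v)
          + Ω.ω (φ x) (V x) (C.covAlongMap φ (fun y => C.covAlongMap φ W y v) x u)) := by
  have dφ := hφ.differentiable two_ne_zero
  have dV := hV.differentiable two_ne_zero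
  have dW := hW.differentiable two_ne_zero
  have dcovV := C.differentiable_covAlongMap hφ hV v x
  have dcovW := C.differentiable_covAlongMap hφ hW v x
  simp only [fun y => C.fderiv_omega_along (dφ y) (dV y) (dW y) v]
  rw [fderiv_fun_add (differentiableAt_comp_clm_apply₂ (Ω.differentiable _) (dφ x) dcovV (dW x))
      (differentiableAt_comp_clm_apply₂ (Ω.differentiable _) (dφ x) (dV x) dcovW),
    _root_.add_apply, C.fderiv_omega_along (dφ x) dcovV (dW x),
    C.fderiv_omega_along (dφ x) (dV x) dcovW]

theorem omega_curvOp_add_eq_zero (hφ : ContDiff ℝ 2 φ) (hV : ContDiff ℝ 2 V)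
    (hW : ContDiff ℝ 2 W) (x u v : F) :
    Ω.ω (φ x) (curvOp C (φ x) (fderiv ℝ φ x u) (fderiv ℝ φ x v) (V x)) (W x)
      + Ω.ω (φ x) (V x) (curvOp C (φ x) (fderiv ℝ φ x u) (fderiv ℝ φ x v) (W x)) = 0 := by
  have homega : ContDiff ℝ 2 fun p => Ω.ω (φ p) (V p) (W p) :=
    (((contDiff_infty.mp Ω.smooth 2).comp hφ).clm_apply hV).clm_apply hW
  have second_symm := fderiv_fderiv_apply_comm homega x u v
  rw [C.fderiv_fderiv_omega_along hφ hV hW, C.fderiv_fderiv_omega_along hφ hV hW] at second_symm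
  rw [← C.covAlongMap_covAlongMap_sub hφ hV, ← C.covAlongMap_covAlongMap_sub hφ hW]
  simp only [map_sub, _root_.sub_apply]
  linarith

theorem Rlow_symm (x u v w z : E) : Rlow C x u v w z = Rlow C x u v z w := by
  have skew := C.omega_curvOp_add_eq_zero contDiff_id (V := fun _ => w) (W := fun _ => z)
    contDiff_const contDiff_const x u v
  simp only [fderiv_id, ContinuousLinearMap.id_apply, id_eq] at skew
  rw [Rlow, Rlow, Ω.skew x _ w]
  linarith

theorem curvOp_bianchi (x u v w : E) :
    curvOp C x u v w + curvOp C x v w u + curvOp C x w u v = 0 := by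
  have fderiv_symm (a b c : E) : fderiv ℝ C.Γ x a b c = fderiv ℝ C.Γ x a c b := by
    have dΓ := C.differentiable x
    rw [← fderiv_clm_apply_const dΓ, ← fderiv_clm_apply_const (dΓ.clm_apply (by fun_prop)),
      ← fderiv_clm_apply_const dΓ, ← fderiv_clm_apply_const (dΓ.clm_apply (by fun_prop))]
    simp_rw [C.symm _ b c]
  simp only [curvOp, _root_.add_apply, _root_.sub_apply, ContinuousLinearMap.comp_apply]
  rw [fderiv_symm u w v, fderiv_symm v w u, fderiv_symm w v u,
    C.symm x v u, C.symm x w u, C.symm x w v]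
  abel

theorem isSymplecticCurvature_Rlow (x : E) : IsSymplecticCurvature (Rlow C x) where
  add_first u u' v w z := by
    simp only [Rlow, curvOp, map_add, map_sub, _root_.add_apply, _root_.sub_apply,
      ContinuousLinearMap.comp_apply]
    ring
  add_third u v w w' z := by simp only [Rlow, map_add, _root_.add_apply]
  antisymm u v w z := by
    simp only [Rlow, curvOp, map_add, map_sub, _root_.add_apply, _root_.sub_apply]
    ring
  symm := C.Rlow_symm x
  bianchi u v w z := by
    simp only [Rlow, ← _root_.add_apply, ← map_add, C.curvOp_bianchi, map_zero, _root_.zero_apply]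

/-- The endomorphism `w ↦ R(w, u) v`, whose trace is the Ricci tensor. -/
noncomputable def ricciEnd (x u v : E) : Module.End ℝ E where
  toFun w := curvOp C x w u v
  map_add' w w' := by simp [curvOp]; abel
  map_smul' c w := by simp [curvOp, smul_sub, smul_add]

theorem ricci_eq_trace (x u v : E) : ricci C x u v = LinearMap.trace ℝ E (C.ricciEnd x u v) := by
  rw [ricci]
  congr 1

/-- The curvature at `x` is of Ricci type, that is, it is determined by a symmetric form. This is
the vanishing of the symplectic Weyl tensor at `x`, without the form being named as
`Ric / (2 (n + 1))`. -/
def IsRicciTypeAt (x : E) : Prop :=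
  ∃ B : LinearMap.BilinForm ℝ E, B.IsSymm ∧
    ∀ u v w z, Rlow C x u v w z = ricciTypeCurv (Ω.ω x).toBilinForm B u v w z

variable {C}

theorem IsRicciTypeAt.exists_ricci_eq [FiniteDimensional ℝ E] {x : E} (hC : C.IsRicciTypeAt x) :
    ∃ B : LinearMap.BilinForm ℝ E, B.IsSymm ∧
      (∀ u v w z, Rlow C x u v w z = ricciTypeCurv (Ω.ω x).toBilinForm B u v w z) ∧
      ∀ u v, ricci C x u v = (Module.finrank ℝ E + 2) * B u v := by
  obtain ⟨B, hB, hR⟩ := hC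
  refine ⟨B, hB, hR, fun u v => ?_⟩
  rw [C.ricci_eq_trace]
  exact trace_eq_of_ricciTypeCurv_add_symm (Ω.nondegenerate_toBilinForm x) (Ω.isAlt_toBilinForm x)
    hB (S := fun _ _ => 0) (fun _ _ => rfl) fun w z => (hR w u v z).trans (add_zero _).symm

/-- The planes on which `Ω` is nondegenerate determine `R(X, Y, X, X)` only where `Ω(X, Y) ≠ 0`; the
remaining `Y` are differences of such vectors. -/
theorem Rlow_diag_of_scurv {x : E} {A : E → ℝ}
    (hA : ∀ X Y, Ω.ω x X Y ≠ 0 → scurv C x X Y X = A X) (X Y : E) :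
    Rlow C x X Y X X = Ω.ω x X Y * A X := by
  have transverse (Z : E) (hXZ : Ω.ω x X Z ≠ 0) : Rlow C x X Z X X = Ω.ω x X Z * A X := by
    rw [← hA X Z hXZ, scurv, mul_div_cancel₀ _ hXZ]
  rcases eq_or_ne X 0 with rfl | hX
  · simp [Rlow]
  obtain ⟨Z, hXZ⟩ : ∃ Z, Ω.ω x X Z ≠ 0 := by
    by_contra! h
    exact hX (Ω.nondeg x X h)
  by_cases hXY : Ω.ω x X Y = 0
  · have sum := transverse (Y + Z) (by rwa [map_add, hXY, zero_add])
    rw [(C.isSymplecticCurvature_Rlow x).add_second, map_add, transverse Z hXZ] at sum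
    linarith
  · exact transverse Y hXY

end SympConnection

theorem HasConstScurv.isRicciTypeAt {Ω : SympForm E} {C : SympConnection Ω} (hC : HasConstScurv C)
    (x : E) : C.IsRicciTypeAt x := by
  obtain ⟨A, ⟨hsymm, -, -⟩, hscurv⟩ := hC
  let B : LinearMap.BilinForm ℝ E := (4⁻¹ : ℝ) • (A x).toBilinForm
  have hB : B.IsSymm := ⟨fun u v => by simp [B, hsymm x u v]⟩
  have halt := Ω.isAlt_toBilinForm x
  refine ⟨B, hB, (C.isSymplecticCurvature_Rlow x).ext_diag
    (isSymplecticCurvature_ricciTypeCurv halt hB) fun X Y => ?_⟩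
  have diag := SympConnection.Rlow_diag_of_scurv (A := fun X => A x X X)
    (fun X Y hXY => hscurv x X Y hXY X (Submodule.subset_span (Set.mem_insert X {Y}))) X Y
  rw [diag, ricciTypeCurv_diag halt]
  simp only [B, ContinuousLinearMap.toBilinForm_apply, LinearMap.smul_apply, smul_eq_mul]
  ring

/-- The data of a symplectic immersion `φ` with its induced connection: `ΩN = φ^*Ω`, and `CN` is the
symplectic projection of the ambient connection, with remainder the second fundamental form `sff`
(the Gauss formula). Arguments of `sff` are evaluated as constant vector fields of the chart. -/
structure IsInducedConnection {F : Type*} [NormedAddCommGroup F] [NormedSpace ℝ F]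
    {Ω : SympForm E} (C : SympConnection Ω) {ΩN : SympForm F} (CN : SympConnection ΩN)
    (φ : F → E) (sff : F → F → F → E) : Prop where
  pullback : ∀ x u v, ΩN.ω x u v = Ω.ω (φ x) (fderiv ℝ φ x u) (fderiv ℝ φ x v)
  gauss_formula : ∀ x u v,
    C.covAlongMap φ (fun y => fderiv ℝ φ y v) x u = fderiv ℝ φ x (CN.Γ x u v) + sff x u v
  orthogonal : ∀ x u v w, Ω.ω (φ x) (sff x u v) (fderiv ℝ φ x w) = 0

namespace IsInducedConnection

variable {F : Type*} [NormedAddCommGroup F] [NormedSpace ℝ F] {Ω : SympForm E}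
  {C : SympConnection Ω} {ΩN : SympForm F} {CN : SympConnection ΩN} {φ : F → E}
  {sff : F → F → F → E}

theorem sff_symm (h : IsInducedConnection C CN φ sff) (hφ : ContDiff ℝ 2 φ) (x u v : F) :
    sff x u v = sff x v u := by
  have cov_symm : C.covAlongMap φ (fun y => fderiv ℝ φ y v) x u
      = C.covAlongMap φ (fun y => fderiv ℝ φ y u) x v := by
    rw [SympConnection.covAlongMap, SympConnection.covAlongMap, fderiv_fderiv_apply_comm hφ, C.symm]
  rw [h.gauss_formula, h.gauss_formula, CN.symm] at cov_symm
  exact add_left_cancel cov_symm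

theorem omega_cov_push (h : IsInducedConnection C CN φ sff) (x u v w : F) :
    Ω.ω (φ x) (C.covAlongMap φ (fun y => fderiv ℝ φ y v) x u) (fderiv ℝ φ x w)
      = ΩN.ω x (CN.Γ x u v) w := by
  rw [h.gauss_formula, map_add, _root_.add_apply, h.orthogonal, add_zero, h.pullback]

theorem omega_cov_cov (h : IsInducedConnection C CN φ sff) (x u v w z : F) :
    Ω.ω (φ x) (C.covAlongMap φ (fun y => fderiv ℝ φ y v) x u)
        (C.covAlongMap φ (fun y => fderiv ℝ φ y z) x w)
      = ΩN.ω x (CN.Γ x u v) (CN.Γ x w z) + Ω.ω (φ x) (sff x u v) (sff x w z) := by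
  rw [h.gauss_formula x w z, map_add, h.omega_cov_push, h.gauss_formula x u v, map_add,
    _root_.add_apply, Ω.skew (φ x) (fderiv ℝ φ x _), h.orthogonal, neg_zero, zero_add]

theorem omega_cov_cov_push (h : IsInducedConnection C CN φ sff) (hφ : ContDiff ℝ 3 φ)
    (x u v w z : F) :
    Ω.ω (φ x) (C.covAlongMap φ
        (fun y => C.covAlongMap φ (fun p => fderiv ℝ φ p w) y v) x u) (fderiv ℝ φ x z)
      = ΩN.ω x (CN.covAlongMap id (fun y => CN.covAlongMap id (fun _ => w) y v) x u) z
        - Ω.ω (φ x) (sff x v w) (sff x u z) := by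
  have hφ2 : ContDiff ℝ 2 φ := hφ.of_le (by norm_num)
  have hpush (a : F) : ContDiff ℝ 2 fun y => fderiv ℝ φ y a :=
    (hφ.fderiv_right (by norm_num)).clm_apply contDiff_const
  have product_rule := C.fderiv_omega_along (hφ2.differentiable two_ne_zero x)
    (C.differentiable_covAlongMap hφ2 (hpush w) v x) ((hpush z).differentiable two_ne_zero x) u
  have product_rule_N := CN.fderiv_omega_along (W := fun _ => z) differentiableAt_id
    (CN.differentiable_covAlongMap contDiff_id (contDiff_const (c := w)) v x)
    (differentiableAt_const z) u
  simp only [h.omega_cov_push, h.omega_cov_cov] at product_rule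
  simp only [id_eq, CN.covAlongMap_id_const] at product_rule_N ⊢
  linarith

theorem gauss_equation (h : IsInducedConnection C CN φ sff) (hφ : ContDiff ℝ 3 φ)
    (x u v w z : F) :
    Rlow C (φ x) (fderiv ℝ φ x u) (fderiv ℝ φ x v) (fderiv ℝ φ x w) (fderiv ℝ φ x z)
      = Rlow CN x u v w z - Ω.ω (φ x) (sff x v w) (sff x u z)
        + Ω.ω (φ x) (sff x u w) (sff x v z) := by
  have curv := C.covAlongMap_covAlongMap_sub (hφ.of_le (by norm_num))
    ((hφ.fderiv_right (m := 2) (by norm_num)).clm_apply (contDiff_const (c := w))) x u v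
  have curv_N := CN.covAlongMap_covAlongMap_sub contDiff_id (contDiff_const (c := w)) x u v
  simp only [fderiv_id, ContinuousLinearMap.id_apply, id_eq] at curv_N
  rw [Rlow, Rlow, ← curv, ← curv_N]
  simp only [map_sub, _root_.sub_apply, h.omega_cov_cov_push hφ]
  ring

/-- Here `trace D` is the term `smc(u, v)`, the `ΩN`-trace of `Ω(Π(u, ·), Π(v, ·))`. -/
theorem ricci_add_smc [FiniteDimensional ℝ F] (h : IsInducedConnection C CN φ sff)
    (hφ : ContDiff ℝ 3 φ) {x : F} {B : LinearMap.BilinForm ℝ E} (hB : B.IsSymm)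
    (hR : ∀ u v w z, Rlow C (φ x) u v w z = ricciTypeCurv (Ω.ω (φ x)).toBilinForm B u v w z)
    (u v : F) {D : Module.End ℝ F}
    (hD : ∀ a b, ΩN.ω x (D a) b = Ω.ω (φ x) (sff x u a) (sff x v b)) :
    ricci CN x u v + LinearMap.trace ℝ F D
      = (Module.finrank ℝ F + 2) * B (fderiv ℝ φ x u) (fderiv ℝ φ x v) := by
  let BN : LinearMap.BilinForm ℝ F := B.comp (fderiv ℝ φ x) (fderiv ℝ φ x)
  have sff_symm := h.sff_symm (hφ.of_le (by norm_num)) x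
  rw [CN.ricci_eq_trace, ← map_add]
  refine trace_eq_of_ricciTypeCurv_add_symm (B := BN) (ΩN.nondegenerate_toBilinForm x)
    (ΩN.isAlt_toBilinForm x) ⟨fun a b => hB.eq _ _⟩
    (S := fun w z => Ω.ω (φ x) (sff x u v) (sff x w z) + ΩN.ω x (D w) z + ΩN.ω x (D z) w)
    (fun w z => by rw [sff_symm w z]; ring) fun w z => ?_
  have gauss := h.gauss_equation hφ x w u v z
  have model : ricciTypeCurv (Ω.ω (φ x)).toBilinForm B (fderiv ℝ φ x w) (fderiv ℝ φ x u)
      (fderiv ℝ φ x v) (fderiv ℝ φ x z) = ricciTypeCurv (ΩN.ω x).toBilinForm BN w u v z := by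
    simp [ricciTypeCurv, BN, h.pullback]
  have smc_term : Ω.ω (φ x) (sff x w v) (sff x u z) = -ΩN.ω x (D z) w := by
    rw [hD, sff_symm v w, Ω.skew]
  have ricci_form : ΩN.ω x (CN.ricciEnd x u v w) z = Rlow CN x w u v z := rfl
  rw [hR, model, smc_term] at gauss
  simp only [ContinuousLinearMap.toBilinForm_apply, LinearMap.add_apply, map_add,
    ricci_form]
  linarith

end IsInducedConnection

theorem statement_13_general {E F : Type*}
    [NormedAddCommGroup E] [NormedSpace ℝ E] [FiniteDimensional ℝ E]
    [NormedAddCommGroup F] [NormedSpace ℝ F] [FiniteDimensional ℝ F]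
    {n k : ℕ} (hdimE : Module.finrank ℝ E = 2 * n) (hdimF : Module.finrank ℝ F = 2 * k)
    {Ω : SympForm E} {C : SympConnection Ω} {φ : F → E} (hφ : ContDiff ℝ 3 φ)
    {ΩN : SympForm F} {CN : SympConnection ΩN} {sff : F → F → F → E}
    (hind : IsInducedConnection C CN φ sff) {x : F} (hC : C.IsRicciTypeAt (φ x)) (u v : F)
    {D : F →ₗ[ℝ] F} (hD : ∀ a b, ΩN.ω x (D a) b = Ω.ω (φ x) (sff x u a) (sff x v b)) :
    ((k : ℝ) + 1) * ricci C (φ x) (fderiv ℝ φ x u) (fderiv ℝ φ x v)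
      = ((n : ℝ) + 1) * (ricci CN x u v + LinearMap.trace ℝ F D) := by
  obtain ⟨B, hB, hR, hricci⟩ := hC.exists_ricci_eq
  rw [hricci, hind.ricci_add_smc hφ hB hR u v hD, hdimE, hdimF]
  push_cast
  ring

/-- Let `φ : N → M` be a smooth symplectic immersion of a `2k`-dimensional
manifold into the `2n`-dimensional symplectic manifold `(M, Ω)` equipped with a symplectic
connection `C` of constant symplectic sectional curvature, and let `CN` be the induced
symplectic connection on `(N, φ^*(Ω))`, with second fundamental form `sff`.  Then
`(k+1)·φ^*(Ric^∇) = (n+1)·(Ric^{∇̄} + smc)`, where `smc(u,v) = ω^{ab}Ω_{AB}Π_{ua}{}^AΠ_{vb}{}^B`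
is encoded as the trace of any linear packaging `D` with
`ω(D a, b) = Ω(Π(u,a), Π(v,b))` (which exists and is unique by nondegeneracy of `ω = φ^*Ω`).
In particular, if `smc = 0` then `Ric^{∇̄} = ((k+1)/(n+1))·φ^*(Ric^∇)`. -/
theorem statement_13 {E F : Type*}
    [NormedAddCommGroup E] [NormedSpace ℝ E] [FiniteDimensional ℝ E]
    [NormedAddCommGroup F] [NormedSpace ℝ F] [FiniteDimensional ℝ F]
    (n k : ℕ) (hdimE : Module.finrank ℝ E = 2 * n) (hdimF : Module.finrank ℝ F = 2 * k)
    (Ω : SympForm E) (C : SympConnection Ω)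
    (φ : F → E) (hφ : ContDiff ℝ (⊤ : ℕ∞) φ)
    (ΩN : SympForm F)
    (hΩN : ∀ x u v, ΩN.ω x u v = Ω.ω (φ x) (fderiv ℝ φ x u) (fderiv ℝ φ x v))
    (CN : SympConnection ΩN)
    (sff : F → F → F → E)
    (hdecomp : ∀ x u v,
      fderiv ℝ (fun y => fderiv ℝ φ y v) x u
        + C.Γ (φ x) (fderiv ℝ φ x u) (fderiv ℝ φ x v)
      = fderiv ℝ φ x (CN.Γ x u v) + sff x u v)
    (hperp : ∀ x u v w, Ω.ω (φ x) (sff x u v) (fderiv ℝ φ x w) = 0)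
    (hconst : HasConstScurv C) :
    ∀ x u v, ∀ D : F →ₗ[ℝ] F,
      (∀ a b, ΩN.ω x (D a) b = Ω.ω (φ x) (sff x u a) (sff x v b)) →
      (((k : ℝ) + 1) * ricci C (φ x) (fderiv ℝ φ x u) (fderiv ℝ φ x v)
          = ((n : ℝ) + 1) * (ricci CN x u v + LinearMap.trace ℝ F D))
      ∧ (LinearMap.trace ℝ F D = 0 →
          ((n : ℝ) + 1) * ricci CN x u v
            = ((k : ℝ) + 1) * ricci C (φ x) (fderiv ℝ φ x u) (fderiv ℝ φ x v)) := by
  intro x u v D hD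
  have key := statement_13_general hdimE hdimF (contDiff_infty.mp hφ 3)
    ⟨hΩN, hdecomp, hperp⟩ (hconst.isRicciTypeAt (φ x)) u v hD
  exact ⟨key, fun hsmc => by rw [key, hsmc, add_zero]⟩
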